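/- Let B_max^t, B_max^r ≥ 0, R > 0, and μ_t, μ_r > 0 with μ_r ≤ R. Let E_t, p_t, B_t : ℕ → ℝ and E_r, p_r, B_r : ℕ → ℝ satisfy: E_t(n), E_r(n) ≥ 0; 0 ≤ p_t(n) ≤ B_t(n); p_r(n) ∈ {0, R} and p_r(n) ≤ B_r(n); the battery recursions B_t(n+1) = min(max(0, B_t(n) + E_t(n) − p_t(n)), B_max^t) and B_r(n+1) = min(max(0, B_r(n) + E_r(n) − p_r(n)), B_max^r) for all n ≥ 1; and (1/N)∑_{n=1}^N E_t(n) → μ_t and (1/N)∑_{n=1}^N E_r(n) → μ_r as N → ∞. Then liminf_{N→∞} (1/N)·∑_{n=1}^N 1{p_r(n) ≠ 0}·log(1 + p_t(n)) ≤ (μ_r/R)·log(1 + R·μ_t/μ_r). -/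

import Mathlib

/-!
The logarithm lies below each of its tangent lines. Taking the tangent of `log (1 + x)` at
`x = a ≥ 0`, whose intercept is nonnegative, and charging the intercept to the energy the receiver
spends when it is on, bounds the rate of every slot by a linear function of the two consumed
energies. Consumption exceeds harvest by at most the initial charge, so on average the consumed
energies are bounded by the harvesting rates. The choice `a = R * μt / μr`, the energy per active
slot when the transmitter spends all its harvest on the slots the receiver can afford, makes the
bound equal to `(μr / R) * log (1 + R * μt / μr)`.
-/

open Filter Topology

section Logarithm

theorem log_one_add_le_tangent {a x : ℝ} (ha : -1 < a) (hx : -1 < x) :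
    Real.log (1 + x) ≤ Real.log (1 + a) - a / (1 + a) + x / (1 + a) := by
  have ha' : 0 < 1 + a := by linarith
  have hx' : 0 < 1 + x := by linarith
  have hlog : Real.log ((1 + x) / (1 + a)) ≤ (1 + x) / (1 + a) - 1 :=
    Real.log_le_sub_one_of_pos (div_pos hx' ha')
  have hdiff : (1 + x) / (1 + a) - 1 = x / (1 + a) - a / (1 + a) := by
    field_simp
    ring
  rw [Real.log_div hx'.ne' ha'.ne', hdiff] at hlog
  linarith

theorem log_one_add_sub_div_nonneg {a : ℝ} (ha : -1 < a) :
    0 ≤ Real.log (1 + a) - a / (1 + a) := by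
  simpa using log_one_add_le_tangent ha (x := 0) (by norm_num)

end Logarithm

section CesaroMean

/-- The average of the first `N` terms of `u`, where slots are numbered from `1`
(and the value at `N = 0` is `0`). -/
noncomputable def cesaroMean (u : ℕ → ℝ) (N : ℕ) : ℝ :=
  (1 / (N : ℝ)) * ∑ n ∈ Finset.Icc 1 N, u n

variable {u v w : ℕ → ℝ}

theorem cesaroMean_nonneg (hu : ∀ n, 1 ≤ n → 0 ≤ u n) (N : ℕ) : 0 ≤ cesaroMean u N :=
  mul_nonneg (by positivity) (Finset.sum_nonneg fun n hn => hu n (Finset.mem_Icc.1 hn).1)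

theorem cesaroMean_le_linear_combination {α β : ℝ}
    (h : ∀ n, 1 ≤ n → u n ≤ α * v n + β * w n) (N : ℕ) :
    cesaroMean u N ≤ α * cesaroMean v N + β * cesaroMean w N := by
  have hsum : ∑ n ∈ Finset.Icc 1 N, u n ≤
      α * ∑ n ∈ Finset.Icc 1 N, v n + β * ∑ n ∈ Finset.Icc 1 N, w n := by
    rw [Finset.mul_sum, Finset.mul_sum, ← Finset.sum_add_distrib]
    exact Finset.sum_le_sum fun n hn => h n (Finset.mem_Icc.1 hn).1
  calc cesaroMean u N
      ≤ (1 / (N : ℝ)) * (α * ∑ n ∈ Finset.Icc 1 N, v n + β * ∑ n ∈ Finset.Icc 1 N, w n) :=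
        mul_le_mul_of_nonneg_left hsum (by positivity)
    _ = α * cesaroMean v N + β * cesaroMean w N := by
        unfold cesaroMean
        ring

theorem tendsto_const_div_add_cesaroMean {μ : ℝ} (b : ℝ)
    (hu : Tendsto (cesaroMean u) atTop (𝓝 μ)) :
    Tendsto (fun N : ℕ => b / N + cesaroMean u N) atTop (𝓝 μ) := by
  simpa only [zero_add] using (tendsto_const_div_atTop_nhds_zero_nat b).add hu

end CesaroMean

/-- A consumption policy `p` is sustained by the harvested energies `E` through a battery with
charge `B`: every slot consumes no more than the stored energy, and the battery never gains more
than the unconsumed harvest. The charge obeys an inequality, so that overflow of a finite battery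
and leakage are both allowed. -/
structure EnergyCausal (E p B : ℕ → ℝ) : Prop where
  consumption_nonneg : ∀ n, 1 ≤ n → 0 ≤ p n
  consumption_le_charge : ∀ n, 1 ≤ n → p n ≤ B n
  charge_succ_le : ∀ n, 1 ≤ n → B (n + 1) ≤ B n + E n - p n

namespace EnergyCausal

variable {E p B : ℕ → ℝ}

theorem of_truncated {Bmax : ℝ} (hE : ∀ n, 1 ≤ n → 0 ≤ E n) (hp : ∀ n, 1 ≤ n → 0 ≤ p n)
    (hpB : ∀ n, 1 ≤ n → p n ≤ B n)
    (hB : ∀ n, 1 ≤ n → B (n + 1) = min (max 0 (B n + E n - p n)) Bmax) :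
    EnergyCausal E p B where
  consumption_nonneg := hp
  consumption_le_charge := hpB
  charge_succ_le n hn := by
    have hnonneg : 0 ≤ B n + E n - p n := by linarith [hE n hn, hpB n hn]
    calc B (n + 1) = min (max 0 (B n + E n - p n)) Bmax := hB n hn
      _ ≤ max 0 (B n + E n - p n) := min_le_left _ _
      _ = B n + E n - p n := max_eq_right hnonneg

theorem sum_consumption_add_charge_le (h : EnergyCausal E p B) (N : ℕ) :
    ∑ n ∈ Finset.Icc 1 N, p n + B (N + 1) ≤ B 1 + ∑ n ∈ Finset.Icc 1 N, E n := by
  induction N with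
  | zero => simp
  | succ k ih =>
    rw [Finset.sum_Icc_succ_top (by omega), Finset.sum_Icc_succ_top (by omega)]
    linarith [h.charge_succ_le (k + 1) (by omega)]

theorem charge_nonneg (h : EnergyCausal E p B) {n : ℕ} (hn : 1 ≤ n) : 0 ≤ B n :=
  (h.consumption_nonneg n hn).trans (h.consumption_le_charge n hn)

theorem cesaroMean_consumption_le (h : EnergyCausal E p B) (N : ℕ) :
    cesaroMean p N ≤ B 1 / N + cesaroMean E N := by
  have hsum : ∑ n ∈ Finset.Icc 1 N, p n ≤ B 1 + ∑ n ∈ Finset.Icc 1 N, E n := by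
    linarith [h.sum_consumption_add_charge_le N, h.charge_nonneg (Nat.le_add_left 1 N)]
  calc cesaroMean p N ≤ (1 / (N : ℝ)) * (B 1 + ∑ n ∈ Finset.Icc 1 N, E n) :=
        mul_le_mul_of_nonneg_left hsum (by positivity)
    _ = B 1 / N + cesaroMean E N := by
        unfold cesaroMean
        ring

end EnergyCausal

section Throughput

/-- The rate of a slot over the Gaussian channel with unit noise power, when the transmitter
spends `x` and the receiver `y`; the receiver is on exactly when `y ≠ 0`. -/
noncomputable def slotRate (x y : ℝ) : ℝ :=
  if y ≠ 0 then Real.log (1 + x) else 0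

theorem slotRate_nonneg {x : ℝ} (hx : 0 ≤ x) (y : ℝ) : 0 ≤ slotRate x y := by
  unfold slotRate
  split_ifs
  · exact Real.log_nonneg (by linarith)
  · exact le_rfl

theorem slotRate_le_linear {R a x y : ℝ} (hR : 0 < R) (ha : -1 < a) (hx : 0 ≤ x)
    (hy : y ≠ 0 → R ≤ y) :
    slotRate x y ≤ (Real.log (1 + a) - a / (1 + a)) / R * y + 1 / (1 + a) * x := by
  have ha' : 0 < 1 + a := by linarith
  by_cases hoff : y = 0
  · simp only [slotRate, hoff, ne_eq, not_true_eq_false, if_false, mul_zero, zero_add]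
    positivity
  · have hintercept : Real.log (1 + a) - a / (1 + a) ≤
        (Real.log (1 + a) - a / (1 + a)) / R * y := by
      rw [div_mul_eq_mul_div, le_div_iff₀ hR]
      exact mul_le_mul_of_nonneg_left (hy hoff) (log_one_add_sub_div_nonneg ha)
    calc slotRate x y = Real.log (1 + x) := if_pos hoff
      _ ≤ Real.log (1 + a) - a / (1 + a) + x / (1 + a) :=
          log_one_add_le_tangent ha (by linarith)
      _ ≤ (Real.log (1 + a) - a / (1 + a)) / R * y + 1 / (1 + a) * x := by
          rw [one_div_mul_eq_div]
          gcongr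

/-- The average rate of the first `N` slots under the transmitter and receiver policies
`pt` and `pr`. -/
noncomputable def throughput (pt pr : ℕ → ℝ) : ℕ → ℝ :=
  cesaroMean fun n => slotRate (pt n) (pr n)

variable {R μt μr : ℝ} {Et pt Bt Er pr Br : ℕ → ℝ}

theorem throughput_nonneg (hpt : ∀ n, 1 ≤ n → 0 ≤ pt n) (N : ℕ) : 0 ≤ throughput pt pr N :=
  cesaroMean_nonneg (fun n hn => slotRate_nonneg (hpt n hn) (pr n)) N

theorem throughput_le_of_energyCausal {a : ℝ} (hR : 0 < R) (ha : -1 < a)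
    (ht : EnergyCausal Et pt Bt) (hr : EnergyCausal Er pr Br)
    (hon : ∀ n, 1 ≤ n → pr n ≠ 0 → R ≤ pr n) (N : ℕ) :
    throughput pt pr N ≤
      (Real.log (1 + a) - a / (1 + a)) / R * (Br 1 / N + cesaroMean Er N) +
        1 / (1 + a) * (Bt 1 / N + cesaroMean Et N) := by
  have hreceiver : 0 ≤ (Real.log (1 + a) - a / (1 + a)) / R :=
    div_nonneg (log_one_add_sub_div_nonneg ha) hR.le
  have htransmitter : 0 ≤ 1 / (1 + a) := one_div_nonneg.2 (by linarith)
  calc throughput pt pr N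
      ≤ (Real.log (1 + a) - a / (1 + a)) / R * cesaroMean pr N +
          1 / (1 + a) * cesaroMean pt N :=
        cesaroMean_le_linear_combination
          (fun n hn => slotRate_le_linear hR ha (ht.consumption_nonneg n hn) (hon n hn)) N
    _ ≤ _ := add_le_add
        (mul_le_mul_of_nonneg_left (hr.cesaroMean_consumption_le N) hreceiver)
        (mul_le_mul_of_nonneg_left (ht.cesaroMean_consumption_le N) htransmitter)

/-- Eventual bounds take the place of a `limsup`, which in `ℝ` would say nothing about a sequence
unbounded above. -/
theorem stmt_9_general (hR : 0 < R) (hμt : 0 ≤ μt) (hμr : 0 < μr)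
    (ht : EnergyCausal Et pt Bt) (hr : EnergyCausal Er pr Br)
    (hon : ∀ n, 1 ≤ n → pr n ≠ 0 → R ≤ pr n)
    (hEt : Tendsto (cesaroMean Et) atTop (𝓝 μt)) (hEr : Tendsto (cesaroMean Er) atTop (𝓝 μr))
    {b : ℝ} (hb : (μr / R) * Real.log (1 + R * μt / μr) < b) :
    ∀ᶠ N in atTop, throughput pt pr N < b := by
  set a := R * μt / μr with ha_def
  have ha : 0 ≤ a := by positivity
  have hlim := ((tendsto_const_div_add_cesaroMean (Br 1) hEr).const_mul
    ((Real.log (1 + a) - a / (1 + a)) / R)).add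
    ((tendsto_const_div_add_cesaroMean (Bt 1) hEt).const_mul (1 / (1 + a)))
  have hvalue : (Real.log (1 + a) - a / (1 + a)) / R * μr + 1 / (1 + a) * μt =
      (μr / R) * Real.log (1 + a) := by
    have hμt_eq : μt = μr / R * a := by
      rw [ha_def]
      field_simp
    rw [hμt_eq]
    ring
  rw [hvalue] at hlim
  filter_upwards [hlim.eventually_lt_const hb] with N hN
  exact (throughput_le_of_energyCausal hR (by linarith) ht hr hon N).trans_lt hN

end Throughput

/-- Per-sample-path form of Lemma 1(b): for a dual energy-harvesting link with an
energy-constrained receiver (`μr ≤ R`), the long-term time-averaged throughput is at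
most `(μr/R)·log(1 + R·μt/μr)`. -/
theorem stmt_9 (Bmaxt Bmaxr R μt μr : ℝ)
    (hBmaxt : 0 ≤ Bmaxt) (hBmaxr : 0 ≤ Bmaxr) (hR : 0 < R)
    (hμt : 0 < μt) (hμr : 0 < μr) (hle : μr ≤ R)
    (Et pt Bt Er pr Br : ℕ → ℝ)
    (hEt : ∀ n, 1 ≤ n → 0 ≤ Et n) (hEr : ∀ n, 1 ≤ n → 0 ≤ Er n)
    (hpt : ∀ n, 1 ≤ n → 0 ≤ pt n ∧ pt n ≤ Bt n)
    (hpr : ∀ n, 1 ≤ n → (pr n = 0 ∨ pr n = R) ∧ pr n ≤ Br n)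
    (hrect : ∀ n, 1 ≤ n → Bt (n + 1) = min (max 0 (Bt n + Et n - pt n)) Bmaxt)
    (hrecr : ∀ n, 1 ≤ n → Br (n + 1) = min (max 0 (Br n + Er n - pr n)) Bmaxr)
    (hconvt : Filter.Tendsto
      (fun N : ℕ => (1 / (N : ℝ)) * ∑ n ∈ Finset.Icc 1 N, Et n)
      Filter.atTop (nhds μt))
    (hconvr : Filter.Tendsto
      (fun N : ℕ => (1 / (N : ℝ)) * ∑ n ∈ Finset.Icc 1 N, Er n)
      Filter.atTop (nhds μr)) :
    Filter.liminf
      (fun N : ℕ => (1 / (N : ℝ)) * ∑ n ∈ Finset.Icc 1 N,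
        (if pr n ≠ 0 then Real.log (1 + pt n) else 0))
      Filter.atTop ≤ (μr / R) * Real.log (1 + R * μt / μr) := by
  have ht : EnergyCausal Et pt Bt := .of_truncated hEt (fun n hn => (hpt n hn).1)
    (fun n hn => (hpt n hn).2) hrect
  have hpr_nonneg : ∀ n, 1 ≤ n → 0 ≤ pr n := fun n hn => by
    rcases (hpr n hn).1 with h | h <;> simp [h, hR.le]
  have hr : EnergyCausal Er pr Br := .of_truncated hEr hpr_nonneg (fun n hn => (hpr n hn).2) hrecr
  have hon : ∀ n, 1 ≤ n → pr n ≠ 0 → R ≤ pr n := fun n hn h => ((hpr n hn).1.resolve_left h).ge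
  have hbdd : IsBoundedUnder (· ≥ ·) atTop (throughput pt pr) :=
    isBoundedUnder_of ⟨0, throughput_nonneg ht.consumption_nonneg⟩
  exact le_of_forall_gt_imp_ge_of_dense fun b hb => liminf_le_of_frequently_le
    ((stmt_9_general hR hμt.le hμr ht hr hon hconvt hconvr hb).mono fun _ => le_of_lt).frequently
    hbdd
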